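/- Norm inflation at general initial data in H^s for gIBq (same-regularity case): let k ≥ 2 be an integer and s < 0, and let v₀, v₁ : ℝ → ℂ be measurable with ‖⟨ξ⟩^s v₀‖_{L²(ℝ)} < ∞ and ‖⟨ξ⟩^s v₁‖_{L²(ℝ)} < ∞. Then for every ε > 0 there exist T ∈ (0, ε), measurable functions w₀, w₁ ∈ L¹(ℝ) and a Fourier-side solution v of gIBq with nonlinearity u^k and data (w₀, w₁) on [0, T] such that ‖⟨ξ⟩^s (w₀ − v₀)‖_{L²(ℝ)} + ‖⟨ξ⟩^s (w₁ − v₁)‖_{L²(ℝ)} < ε and ‖⟨ξ⟩^s v(T)‖_{L²(ℝ)} > ε⁻¹. -/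

import Mathlib

open MeasureTheory Filter
open scoped ENNReal

noncomputable section

/-- The Japanese bracket weight `⟨ξ⟩^s = (1+ξ²)^(s/2)`. -/
def jbw (s ξ : ℝ) : ℝ := (1 + ξ ^ 2) ^ (s / 2)

/-- `λ(ξ) = |ξ|/⟨ξ⟩`. -/
def lam (ξ : ℝ) : ℝ := |ξ| / (1 + ξ ^ 2) ^ ((1 : ℝ) / 2)

/-- The multiplier `m(t,ξ) = sin(tλ(ξ))/λ(ξ)` for `ξ ≠ 0`, `m(t,0) = t`. -/
def mker (t ξ : ℝ) : ℝ := if ξ = 0 then t else Real.sin (t * lam ξ) / lam ξ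

/-- Fourier side linear propagator `Ŝ(t)(v₀,v₁)`. -/
def Shat (t : ℝ) (v₀ v₁ : ℝ → ℂ) (ξ : ℝ) : ℂ :=
  (Real.cos (t * lam ξ) : ℂ) * v₀ ξ + (mker t ξ : ℂ) * v₁ ξ

/-- Convolution of complex valued functions on `ℝ`. -/
def conv (f g : ℝ → ℂ) (ξ : ℝ) : ℂ := ∫ η, f η * g (ξ - η)

/-- Iterated convolution of a list of functions. -/
def convList : List (ℝ → ℂ) → ℝ → ℂ
  | [] => fun _ => 0
  | [f] => f
  | f :: g :: fs => conv f (convList (g :: fs))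

/-- Fourier side Duhamel operator `Î_k`. -/
def Ihat (k : ℕ) (w : Fin k → ℝ → ℝ → ℂ) (t ξ : ℝ) : ℂ :=
  ∫ t' in (0:ℝ)..t,
    ((Real.sin ((t - t') * lam ξ) * lam ξ : ℝ) : ℂ) * convList (List.ofFn fun i => w i t') ξ

/-- Continuity of a curve of functions with respect to the `L¹` norm, on `[0,T]`. -/
def ContinuousL1On (T : ℝ) (v : ℝ → ℝ → ℂ) : Prop :=
  ∀ t₀ ∈ Set.Icc (0 : ℝ) T,
    Tendsto (fun t => eLpNorm (fun ξ => v t ξ - v t₀ ξ) 1 volume)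
      (nhdsWithin t₀ (Set.Icc (0 : ℝ) T)) (nhds 0)

/-- Fourier-side solution of the generalized improved Boussinesq equation with
nonlinearity `u^k` and data `(v₀, v₁)` on `[0, T]`. -/
def IsGIBqSol (k : ℕ) (T : ℝ) (v₀ v₁ : ℝ → ℂ) (v : ℝ → ℝ → ℂ) : Prop :=
  (∀ t ∈ Set.Icc (0 : ℝ) T, Integrable (v t)) ∧
  ContinuousL1On T v ∧
  ∀ t ∈ Set.Icc (0 : ℝ) T,
    ∀ᵐ ξ ∂volume, v t ξ = Shat t v₀ v₁ ξ + Ihat k (fun _ => v) t ξ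

/-- Picard iterates `Ξ̂_j` for gIBq on the Fourier side. -/
def Xi (k : ℕ) (v₀ v₁ : ℝ → ℂ) : ℕ → ℝ → ℝ → ℂ
  | 0 => fun t => Shat t v₀ v₁
  | (j+1) => fun t ξ =>
      ∑ p ∈ (Finset.Nat.antidiagonalTuple k j).attach,
        Ihat k (fun i => Xi k v₀ v₁ (p.1 i)) t ξ
decreasing_by
  have hsum := Finset.Nat.mem_antidiagonalTuple.mp p.2
  have hle : p.1 i ≤ j := by
    calc p.1 i ≤ ∑ i', p.1 i' :=
          Finset.single_le_sum (fun _ _ => Nat.zero_le _) (Finset.mem_univ i)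
      _ = j := hsum
  omega

/-- The `FL^{s,p}` norm on the Fourier side: `‖⟨ξ⟩^s w‖_{L^p}`. -/
def FLnorm (s : ℝ) (p : ℝ≥0∞) (w : ℝ → ℂ) : ℝ≥0∞ :=
  eLpNorm (fun ξ => jbw s ξ * ‖w ξ‖) p volume

end

/-!
Write `k = n + 1`. Approximate the data by integrable functions `ψ₀, ψ₁` and add to `ψ₀` two
bumps of height `R`, around the frequencies `N` and `-nN`. Since `s < 0`, this perturbation is
small in the weighted norm as soon as `N` is large, whatever `R`. In the `k`-fold convolution,
`n` factors near `N` and one near `-nN` produce a contribution near the frequency `0`, where the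
linear evolution of the bumps vanishes. All the functions involved being nonnegative for short
times, nothing cancels it: the Duhamel term of the bumps has size at least `c T² Rᵏ` on
`[1/2, 1]`.

The solution is obtained by contraction in `L¹` when `T² Rⁿ` is small, and then differs from the
sum of the linear evolution and this Duhamel term by `O(‖ψ₀‖ + ‖ψ₁‖ + (T² Rⁿ)² R)`. Choosing `T` and
`R` with `T² Rⁿ → 0` and `T² Rᵏ → ∞` at appropriate rates makes the low frequencies of the solution
as large as desired. Only the band `[1/2, 1]` matters for the final lower bound, hence any weight
`σ` and exponent `q` will do there.
-/

noncomputable section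

open Set Topology
open scoped Convolution

section BilinPow

variable {𝕜 E : Type*} [NontriviallyNormedField 𝕜] [NormedAddCommGroup E] [NormedSpace 𝕜 E]

/-- The `(n + 1)`-fold product of `f` with itself for a bilinear product `B`, associated to the
right. The exponent is shifted since `B` need not have a unit. -/
def bilinPow (B : E →L[𝕜] E →L[𝕜] E) (f : E) : ℕ → E
  | 0 => f
  | n + 1 => B f (bilinPow B f n)

variable (B : E →L[𝕜] E →L[𝕜] E)

lemma bilinPow_zero_left (n : ℕ) : bilinPow B 0 n = 0 := by
  cases n <;> simp [bilinPow]

lemma norm_bilinPow_le (f : E) (n : ℕ) : ‖bilinPow B f n‖ ≤ ‖B‖ ^ n * ‖f‖ ^ (n + 1) := by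
  induction n with
  | zero => simp [bilinPow]
  | succ n ih =>
    calc ‖B f (bilinPow B f n)‖ ≤ ‖B‖ * ‖f‖ * ‖bilinPow B f n‖ := B.le_opNorm₂ _ _
      _ ≤ ‖B‖ * ‖f‖ * (‖B‖ ^ n * ‖f‖ ^ (n + 1)) := by gcongr
      _ = ‖B‖ ^ (n + 1) * ‖f‖ ^ (n + 1 + 1) := by ring

lemma norm_bilinPow_sub_le {f g : E} {M : ℝ} (hf : ‖f‖ ≤ M) (hg : ‖g‖ ≤ M) (n : ℕ) :
    ‖bilinPow B f n - bilinPow B g n‖ ≤ (n + 1) * ‖B‖ ^ n * M ^ n * ‖f - g‖ := by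
  have hM : 0 ≤ M := (norm_nonneg f).trans hf
  induction n with
  | zero => simp [bilinPow]
  | succ n ih =>
    have telescope : bilinPow B f (n + 1) - bilinPow B g (n + 1)
        = B (f - g) (bilinPow B f n) + B g (bilinPow B f n - bilinPow B g n) := by
      simp [bilinPow]
    calc ‖bilinPow B f (n + 1) - bilinPow B g (n + 1)‖
        ≤ ‖B‖ * ‖f - g‖ * ‖bilinPow B f n‖ + ‖B‖ * ‖g‖ * ‖bilinPow B f n - bilinPow B g n‖ := by
          rw [telescope]
          exact (norm_add_le _ _).trans (add_le_add (B.le_opNorm₂ _ _) (B.le_opNorm₂ _ _))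
      _ ≤ ‖B‖ * ‖f - g‖ * (‖B‖ ^ n * M ^ (n + 1))
          + ‖B‖ * M * ((n + 1) * ‖B‖ ^ n * M ^ n * ‖f - g‖) := by
          gcongr
          exact (norm_bilinPow_le B f n).trans (by gcongr)
      _ = ((n + 1 : ℕ) + 1) * ‖B‖ ^ (n + 1) * M ^ (n + 1) * ‖f - g‖ := by push_cast; ring

end BilinPow

lemma exists_eq_add_of_contracting {E : Type*} [NormedAddCommGroup E] [CompleteSpace E] (a : E)
    {N : E → E} (hN0 : N 0 = 0)
    (hN : ∀ f g, ‖f‖ ≤ 2 * ‖a‖ → ‖g‖ ≤ 2 * ‖a‖ → ‖N f - N g‖ ≤ 1 / 2 * ‖f - g‖) :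
    ∃ v, v = a + N v ∧ ‖v‖ ≤ 2 * ‖a‖ := by
  have maps_ball : MapsTo (fun v ↦ a + N v) (Metric.closedBall 0 (2 * ‖a‖))
      (Metric.closedBall 0 (2 * ‖a‖)) := fun v hv ↦ by
    rw [mem_closedBall_zero_iff] at hv ⊢
    have hNv := hN v 0 hv (by simp)
    rw [hN0, sub_zero, sub_zero] at hNv
    linarith [norm_add_le a (N v)]
  have contracting : ContractingWith (1 / 2) (maps_ball.restrict (fun v ↦ a + N v) _ _) := by
    refine ⟨by norm_num, LipschitzWith.of_dist_le_mul ?_⟩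
    rintro ⟨f, hf⟩ ⟨g, hg⟩
    rw [mem_closedBall_zero_iff] at hf hg
    simpa [Subtype.dist_eq, dist_eq_norm] using hN f g hf hg
  obtain ⟨v, hv, hfix, -⟩ := contracting.exists_fixedPoint' Metric.isClosed_closedBall.isComplete
    maps_ball (x := 0) (by simp) (edist_ne_top _ _)
  exact ⟨v, hfix.symm, by simpa using hv⟩

section ConvolutionL1

variable {𝕜 G E E' F : Type*} [RCLike 𝕜]
  [NormedAddCommGroup E] [NormedSpace 𝕜 E] [NormedAddCommGroup E'] [NormedSpace 𝕜 E']
  [NormedAddCommGroup F] [NormedSpace 𝕜 F]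
  [AddGroup G] [MeasurableSpace G] [MeasurableAdd₂ G] [MeasurableNeg G]
  (L : E →L[𝕜] E' →L[𝕜] F) {μ : Measure G} [SFinite μ] [μ.IsAddRightInvariant]

lemma ae_convolutionExistsAt_L1 (f : Lp E 1 μ) (g : Lp E' 1 μ) :
    ∀ᵐ x ∂μ, ConvolutionExistsAt f g x L μ :=
  (L1.integrable_coeFn f).ae_convolution_exists L (L1.integrable_coeFn g)

variable [NormedSpace ℝ F]

/-- The convolution of two classes in `L¹` as a class in `L¹`, before it is known to be bilinear
and bounded; see `convolutionL1`. -/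
def convolutionToL1 (f : Lp E 1 μ) (g : Lp E' 1 μ) : Lp F 1 μ :=
  ((L1.integrable_coeFn f).integrable_convolution L (L1.integrable_coeFn g)).toL1 (f ⋆[L, μ] g)

lemma coeFn_convolutionToL1 (f : Lp E 1 μ) (g : Lp E' 1 μ) :
    convolutionToL1 L f g =ᵐ[μ] f ⋆[L, μ] g :=
  Integrable.coeFn_toL1 _

lemma norm_convolutionToL1_le (f : Lp E 1 μ) (g : Lp E' 1 μ) :
    ‖convolutionToL1 L f g‖ ≤ ‖L‖ * ‖f‖ * ‖g‖ := by
  have hf := (L1.integrable_coeFn f).norm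
  have hg := (L1.integrable_coeFn g).norm
  have norm_convolution_le : ∀ᵐ x ∂μ,
      ‖(f ⋆[L, μ] g) x‖ ≤ ‖L‖ * ((‖f ·‖) ⋆[.mul ℝ ℝ, μ] (‖g ·‖)) x := by
    filter_upwards [hf.ae_convolution_exists (.mul ℝ ℝ) hg] with x hx
    rw [convolution_def, convolution_def, ← integral_const_mul]
    refine norm_integral_le_of_norm_le (hx.const_mul _) (.of_forall fun y ↦ ?_)
    simpa [mul_assoc] using L.le_opNorm₂ (f y) (g (x - y))
  calc ‖convolutionToL1 L f g‖ = ∫ x, ‖(f ⋆[L, μ] g) x‖ ∂μ := L1.norm_of_fun_eq_integral_norm _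
    _ ≤ ∫ x, ‖L‖ * ((‖f ·‖) ⋆[.mul ℝ ℝ, μ] (‖g ·‖)) x ∂μ :=
      integral_mono_ae
        ((L1.integrable_coeFn f).integrable_convolution L (L1.integrable_coeFn g)).norm
        ((hf.integrable_convolution _ hg).const_mul _) norm_convolution_le
    _ = ‖L‖ * ‖f‖ * ‖g‖ := by
      rw [integral_const_mul, integral_convolution _ hf hg, L1.norm_eq_integral_norm f,
        L1.norm_eq_integral_norm g, ContinuousLinearMap.mul_apply', mul_assoc]

variable [SMulCommClass ℝ 𝕜 F]

/-- Convolution as a bounded bilinear map `L¹ × L¹ → L¹` (Young's inequality), for functions with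
values in normed spaces paired by `L`. -/
def convolutionL1 : Lp E 1 μ →L[𝕜] Lp E' 1 μ →L[𝕜] Lp F 1 μ :=
  (LinearMap.mk₂ 𝕜 (convolutionToL1 L)
    (fun f f' g ↦ Lp.ext <| by
      filter_upwards [coeFn_convolutionToL1 L (f + f') g, coeFn_convolutionToL1 L f g,
        coeFn_convolutionToL1 L f' g, ae_convolutionExistsAt_L1 L f g,
        ae_convolutionExistsAt_L1 L f' g,
        Lp.coeFn_add (convolutionToL1 L f g) (convolutionToL1 L f' g)] with x e e₁ e₂ h₁ h₂ e₃
      rw [e, e₃, Pi.add_apply, e₁, e₂, ← h₁.add_distrib h₂,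
        convolution_congr L (Lp.coeFn_add f f') .rfl])
    (fun c f g ↦ Lp.ext <| by
      filter_upwards [coeFn_convolutionToL1 L (c • f) g, coeFn_convolutionToL1 L f g,
        Lp.coeFn_smul c (convolutionToL1 L f g)] with x e e₁ e₂
      rw [e, e₂, Pi.smul_apply, e₁, convolution_congr L (Lp.coeFn_smul c f) .rfl,
        smul_convolution, Pi.smul_apply])
    (fun f g g' ↦ Lp.ext <| by
      filter_upwards [coeFn_convolutionToL1 L f (g + g'), coeFn_convolutionToL1 L f g,
        coeFn_convolutionToL1 L f g', ae_convolutionExistsAt_L1 L f g,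
        ae_convolutionExistsAt_L1 L f g',
        Lp.coeFn_add (convolutionToL1 L f g) (convolutionToL1 L f g')] with x e e₁ e₂ h₁ h₂ e₃
      rw [e, e₃, Pi.add_apply, e₁, e₂, ← h₁.distrib_add h₂,
        convolution_congr L .rfl (Lp.coeFn_add g g')])
    (fun c f g ↦ Lp.ext <| by
      filter_upwards [coeFn_convolutionToL1 L f (c • g), coeFn_convolutionToL1 L f g,
        Lp.coeFn_smul c (convolutionToL1 L f g)] with x e e₁ e₂
      rw [e, e₂, Pi.smul_apply, e₁, convolution_congr L .rfl (Lp.coeFn_smul c g),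
        convolution_smul, Pi.smul_apply])).mkContinuous₂ ‖L‖ (norm_convolutionToL1_le L)

lemma coeFn_convolutionL1 (f : Lp E 1 μ) (g : Lp E' 1 μ) :
    convolutionL1 L f g =ᵐ[μ] f ⋆[L, μ] g :=
  coeFn_convolutionToL1 L f g

lemma norm_convolutionL1_le : ‖convolutionL1 L (μ := μ)‖ ≤ ‖L‖ :=
  LinearMap.mkContinuous₂_norm_le _ (norm_nonneg L) _

end ConvolutionL1

section ConvPow

variable {𝕜 G E : Type*} [RCLike 𝕜] [NormedAddCommGroup E] [NormedSpace 𝕜 E] [NormedSpace ℝ E]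
  [SMulCommClass ℝ 𝕜 E] [AddGroup G] [MeasurableSpace G] [MeasurableAdd₂ G] [MeasurableNeg G]
  {μ : Measure G} [SFinite μ] [μ.IsAddRightInvariant] (L : E →L[𝕜] E →L[𝕜] E)

/-- The `(n + 1)`-fold convolution of `f` with itself. -/
def convPow (f : Lp E 1 μ) (n : ℕ) : Lp E 1 μ := bilinPow (convolutionL1 L) f n

lemma convPow_zero_left (n : ℕ) : convPow L (0 : Lp E 1 μ) n = 0 :=
  bilinPow_zero_left _ n

lemma convPow_succ (f : Lp E 1 μ) (n : ℕ) :
    convPow L f (n + 1) = convolutionL1 L f (convPow L f n) :=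
  rfl

lemma norm_convPow_sub_le {f g : Lp E 1 μ} {M : ℝ} (hf : ‖f‖ ≤ M) (hg : ‖g‖ ≤ M) (n : ℕ) :
    ‖convPow L f n - convPow L g n‖ ≤ (n + 1) * ‖L‖ ^ n * M ^ n * ‖f - g‖ := by
  have hM : 0 ≤ M := (norm_nonneg f).trans hf
  refine (norm_bilinPow_sub_le _ hf hg n).trans ?_
  gcongr
  exact norm_convolutionL1_le L

end ConvPow

section FiberwiseLp

variable {𝕜 X E F : Type*} [NontriviallyNormedField 𝕜]
  [NormedAddCommGroup E] [NormedSpace 𝕜 E] [NormedAddCommGroup F] [NormedSpace 𝕜 F]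
  [TopologicalSpace X] [TopologicalSpace.PseudoMetrizableSpace X] [SecondCountableTopology X]
  [MeasurableSpace X] [OpensMeasurableSpace X] {μ : Measure X} {p : ℝ≥0∞}
  {K : X → E →L[𝕜] F} {C : ℝ}

lemma memLp_fiberwise (hK : Continuous fun q : X × E ↦ K q.1 q.2) (hC : ∀ x, ‖K x‖ ≤ C)
    (f : Lp E p μ) : MemLp (fun x ↦ K x (f x)) p μ :=
  (Lp.memLp f).of_le_mul
    (hK.comp_aestronglyMeasurable
      (aestronglyMeasurable_id.prodMk (Lp.aestronglyMeasurable f)))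
    (.of_forall fun x ↦ (K x).le_of_opNorm_le (hC x) _)

variable [Fact (1 ≤ p)]

/-- The operator `f ↦ (x ↦ K x (f x))` on `Lᵖ` given by a jointly continuous, uniformly bounded
family of operators `K x` on the fibers: an operator-valued Fourier multiplier, seen on the Fourier
side. -/
def fiberwiseLp (hK : Continuous fun q : X × E ↦ K q.1 q.2) (hC : ∀ x, ‖K x‖ ≤ C) :
    Lp E p μ →L[𝕜] Lp F p μ :=
  LinearMap.mkContinuous
    { toFun f := (memLp_fiberwise hK hC f).toLp _
      map_add' f g := by
        rw [← MemLp.toLp_add]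
        refine MemLp.toLp_congr _ _ ?_
        filter_upwards [Lp.coeFn_add f g] with x hx
        rw [hx, Pi.add_apply, map_add, Pi.add_apply]
      map_smul' c f := by
        rw [RingHom.id_apply, ← MemLp.toLp_const_smul]
        refine MemLp.toLp_congr _ _ ?_
        filter_upwards [Lp.coeFn_smul c f] with x hx
        rw [hx, Pi.smul_apply, map_smul, Pi.smul_apply] }
    C fun f ↦ Lp.norm_le_mul_norm_of_ae_le_mul <| by
      filter_upwards [(memLp_fiberwise hK hC f).coeFn_toLp] with x hx
      rw [LinearMap.coe_mk, AddHom.coe_mk, hx]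
      exact (K x).le_of_opNorm_le (hC x) _

lemma coeFn_fiberwiseLp (hK : Continuous fun q : X × E ↦ K q.1 q.2) (hC : ∀ x, ‖K x‖ ≤ C)
    (f : Lp E p μ) : fiberwiseLp hK hC f =ᵐ[μ] fun x ↦ K x (f x) :=
  (memLp_fiberwise hK hC f).coeFn_toLp

lemma norm_fiberwiseLp_apply_le (hK : Continuous fun q : X × E ↦ K q.1 q.2)
    (hC : ∀ x, ‖K x‖ ≤ C) (f : Lp E p μ) : ‖fiberwiseLp hK hC f‖ ≤ C * ‖f‖ :=
  Lp.norm_le_mul_norm_of_ae_le_mul <| by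
    filter_upwards [coeFn_fiberwiseLp hK hC f] with x hx
    rw [hx]
    exact (K x).le_of_opNorm_le (hC x) _

end FiberwiseLp

section Symbol

lemma lam_nonneg (ξ : ℝ) : 0 ≤ lam ξ := by unfold lam; positivity

lemma lam_sq (ξ : ℝ) : lam ξ ^ 2 = ξ ^ 2 / (1 + ξ ^ 2) := by
  rw [lam, ← Real.sqrt_eq_rpow, div_pow, Real.sq_sqrt (by positivity), sq_abs]

lemma lam_le_one (ξ : ℝ) : lam ξ ≤ 1 := by
  rw [← sq_le_one_iff₀ (lam_nonneg ξ), lam_sq, div_le_one (by positivity)]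
  linarith

lemma lam_ne_zero {ξ : ℝ} (hξ : ξ ≠ 0) : lam ξ ≠ 0 := by
  rw [← sq_pos_iff, lam_sq]
  positivity

@[fun_prop]
lemma continuous_lam : Continuous lam := by
  unfold lam
  refine continuous_abs.div ?_ fun ξ ↦ by positivity
  exact Continuous.rpow_const (by fun_prop) fun _ ↦ Or.inr (by norm_num)

lemma mker_eq_sinc (t ξ : ℝ) : mker t ξ = t * Real.sinc (t * lam ξ) := by
  unfold mker
  split_ifs with hξ
  · simp [hξ, lam]
  rcases eq_or_ne t 0 with rfl | ht
  · simp
  have hlam := lam_ne_zero hξ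
  rw [Real.sinc_of_ne_zero (mul_ne_zero ht hlam)]
  field_simp

/-- The kernel `sin ((t - t') λ(ξ)) λ(ξ)` of the Duhamel operator. -/
def duhamelKernel (ξ t t' : ℝ) : ℝ := Real.sin ((t - t') * lam ξ) * lam ξ

@[fun_prop]
lemma continuous_duhamelKernel :
    Continuous fun q : ℝ × ℝ × ℝ ↦ duhamelKernel q.1 q.2.1 q.2.2 := by
  unfold duhamelKernel
  fun_prop

lemma abs_duhamelKernel_le (ξ t t' : ℝ) : |duhamelKernel ξ t t'| ≤ |t - t'| := by
  have h₀ := lam_nonneg ξ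
  have h₁ := lam_le_one ξ
  calc |duhamelKernel ξ t t'| = |Real.sin ((t - t') * lam ξ)| * lam ξ := by
        rw [duhamelKernel, abs_mul, abs_of_nonneg h₀]
    _ ≤ |t - t'| * lam ξ * lam ξ := by
        gcongr
        simpa [abs_mul, abs_of_nonneg h₀] using
          Real.abs_sin_le_abs (x := (t - t') * lam ξ)
    _ ≤ |t - t'| * 1 * 1 := by gcongr
    _ = |t - t'| := by ring

lemma le_duhamelKernel {ξ t t' : ℝ} (hξ : 1 / 2 ≤ ξ) (h₀ : t' ≤ t) (h₁ : t - t' ≤ 1) :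
    (t - t') / 10 ≤ duhamelKernel ξ t t' := by
  have lam_sq_ge : 1 / 5 ≤ lam ξ ^ 2 := by
    rw [lam_sq, le_div_iff₀ (by positivity)]
    nlinarith
  have angle_nonneg : 0 ≤ (t - t') * lam ξ := mul_nonneg (by linarith) (lam_nonneg ξ)
  have angle_le : (t - t') * lam ξ ≤ 1 := mul_le_one₀ h₁ (lam_nonneg ξ) (lam_le_one ξ)
  have half_le : 1 / 2 ≤ 2 / Real.pi := by
    rw [div_le_div_iff₀ two_pos Real.pi_pos]
    linarith [Real.pi_le_four]
  calc (t - t') / 10 = 1 / 2 * (t - t') * (1 / 5) := by ring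
    _ ≤ 1 / 2 * (t - t') * lam ξ ^ 2 :=
      mul_le_mul_of_nonneg_left lam_sq_ge (by linarith)
    _ = 1 / 2 * ((t - t') * lam ξ) * lam ξ := by ring
    _ ≤ 2 / Real.pi * ((t - t') * lam ξ) * lam ξ := by
      have := lam_nonneg ξ
      gcongr
    _ ≤ Real.sin ((t - t') * lam ξ) * lam ξ :=
      mul_le_mul_of_nonneg_right
        (Real.mul_le_sin angle_nonneg (by linarith [Real.pi_gt_three])) (lam_nonneg ξ)

end Symbol

/-- The time histories on `[0, T]` of a single frequency. -/
abbrev TimeCurve (T : ℝ) : Type := C(Icc (0 : ℝ) T, ℂ)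

/-- The space `L¹(ℝ; C[0, T])` in which the equation is solved. It is smaller than
`C([0, T]; L¹(ℝ))`, and makes Duhamel's formula an identity of curves for almost every frequency. -/
abbrev SolutionSpace (T : ℝ) : Type := Lp (TimeCurve T) 1 (volume : Measure ℝ)

section LinearEvolution

/-- The curves `t ↦ cos (t λ(ξ))`. -/
def cosCurve (T : ℝ) : C(ℝ, TimeCurve T) :=
  ContinuousMap.curry ⟨fun q ↦ (Real.cos (q.2 * lam q.1) : ℂ), by fun_prop⟩

/-- The curves `t ↦ m(t, ξ)`. -/
def mkerCurve (T : ℝ) : C(ℝ, TimeCurve T) :=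
  ContinuousMap.curry ⟨fun q ↦ (mker q.2 q.1 : ℂ), by
    have := Real.continuous_sinc
    simp only [mker_eq_sinc]
    fun_prop⟩

variable {T : ℝ}

lemma cosCurve_apply (ξ : ℝ) (t : Icc (0 : ℝ) T) : cosCurve T ξ t = Real.cos (t * lam ξ) := rfl

lemma mkerCurve_apply (ξ : ℝ) (t : Icc (0 : ℝ) T) : mkerCurve T ξ t = mker t ξ := rfl

lemma norm_cosCurve_le (ξ : ℝ) : ‖cosCurve T ξ‖ ≤ 1 := by
  refine (ContinuousMap.norm_le _ zero_le_one).2 fun t ↦ ?_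
  rw [cosCurve_apply, Complex.norm_real]
  exact Real.abs_cos_le_one _

lemma norm_mkerCurve_le (hT : 0 ≤ T) (ξ : ℝ) : ‖mkerCurve T ξ‖ ≤ T := by
  refine (ContinuousMap.norm_le _ hT).2 fun t ↦ ?_
  rw [mkerCurve_apply, Complex.norm_real, mker_eq_sinc, norm_mul, Real.norm_of_nonneg t.2.1]
  exact (mul_le_of_le_one_right t.2.1 (Real.abs_sinc_le_one _)).trans t.2.2

/-- Multiplication of a function of the frequency by a bounded continuous family of curves. -/
def curveMultiplier {C : ℝ} (m : C(ℝ, TimeCurve T)) (hm : ∀ ξ, ‖m ξ‖ ≤ C) :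
    Lp ℂ 1 (volume : Measure ℝ) →L[ℂ] SolutionSpace T :=
  fiberwiseLp (K := fun ξ ↦ ContinuousLinearMap.toSpanSingleton ℂ (m ξ))
    (by simp only [ContinuousLinearMap.toSpanSingleton_apply]; fun_prop)
    (fun ξ ↦ (ContinuousLinearMap.norm_toSpanSingleton _).trans_le (hm ξ))

lemma coeFn_curveMultiplier {C : ℝ} (m : C(ℝ, TimeCurve T)) (hm : ∀ ξ, ‖m ξ‖ ≤ C)
    (w : Lp ℂ 1 (volume : Measure ℝ)) :
    curveMultiplier m hm w =ᵐ[volume] fun ξ ↦ w ξ • m ξ := by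
  unfold curveMultiplier
  exact coeFn_fiberwiseLp (K := fun ξ ↦ ContinuousLinearMap.toSpanSingleton ℂ (m ξ)) _ _ w

lemma norm_curveMultiplier_le {C : ℝ} (m : C(ℝ, TimeCurve T)) (hm : ∀ ξ, ‖m ξ‖ ≤ C)
    (w : Lp ℂ 1 (volume : Measure ℝ)) : ‖curveMultiplier m hm w‖ ≤ C * ‖w‖ := by
  unfold curveMultiplier
  exact norm_fiberwiseLp_apply_le (K := fun ξ ↦ ContinuousLinearMap.toSpanSingleton ℂ (m ξ)) _ _ w

/-- The linear propagator `Ŝ` as an element of the solution space. -/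
def linearEvolution (hT : 0 ≤ T) (w₀ w₁ : Lp ℂ 1 (volume : Measure ℝ)) : SolutionSpace T :=
  curveMultiplier (cosCurve T) norm_cosCurve_le w₀ +
    curveMultiplier (mkerCurve T) (norm_mkerCurve_le hT) w₁

lemma linearEvolution_apply (hT : 0 ≤ T) (w₀ w₁ : Lp ℂ 1 (volume : Measure ℝ)) :
    ∀ᵐ ξ, ∀ t, linearEvolution hT w₀ w₁ ξ t = Shat t w₀ w₁ ξ := by
  filter_upwards [Lp.coeFn_add (curveMultiplier (cosCurve T) norm_cosCurve_le w₀)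
    (curveMultiplier (mkerCurve T) (norm_mkerCurve_le hT) w₁), coeFn_curveMultiplier _ _ w₀,
    coeFn_curveMultiplier _ _ w₁] with ξ e e₀ e₁ t
  rw [linearEvolution, e, Pi.add_apply, e₀, e₁, Shat]
  simp [cosCurve_apply, mkerCurve_apply, mul_comm]

lemma linearEvolution_add (hT : 0 ≤ T) (f₀ g₀ f₁ g₁ : Lp ℂ 1 (volume : Measure ℝ)) :
    linearEvolution hT (f₀ + g₀) (f₁ + g₁)
      = linearEvolution hT f₀ f₁ + linearEvolution hT g₀ g₁ := by
  simp only [linearEvolution, map_add]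
  abel

lemma norm_linearEvolution_le (hT : 0 ≤ T) (w₀ w₁ : Lp ℂ 1 (volume : Measure ℝ)) :
    ‖linearEvolution hT w₀ w₁‖ ≤ ‖w₀‖ + T * ‖w₁‖ :=
  norm_add_le_of_le ((norm_curveMultiplier_le _ _ w₀).trans_eq (one_mul _))
    (norm_curveMultiplier_le _ _ w₁)

end LinearEvolution

section Duhamel

variable {T : ℝ} (hT : 0 ≤ T)

lemma continuous_duhamelIntegrand :
    Continuous fun q : ((ℝ × TimeCurve T) × Icc (0 : ℝ) T) × ℝ ↦
      (duhamelKernel q.1.1.1 q.1.2 q.2 : ℂ) * IccExtend hT q.1.1.2 q.2 := by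
  have heval : Continuous fun q : ((ℝ × TimeCurve T) × Icc (0 : ℝ) T) × ℝ ↦
      q.1.1.2 (projIcc 0 T hT q.2) :=
    continuous_eval.comp (f := fun q : ((ℝ × TimeCurve T) × Icc (0 : ℝ) T) × ℝ ↦
      (q.1.1.2, projIcc 0 T hT q.2))
      ((by fun_prop : Continuous _).prodMk (continuous_projIcc.comp continuous_snd))
  have hkernel : Continuous fun q : ((ℝ × TimeCurve T) × Icc (0 : ℝ) T) × ℝ ↦
      duhamelKernel q.1.1.1 q.1.2 q.2 :=
    continuous_duhamelKernel.comp (f := fun q : ((ℝ × TimeCurve T) × Icc (0 : ℝ) T) × ℝ ↦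
      (q.1.1.1, (q.1.2 : ℝ), q.2)) (by fun_prop)
  exact (Complex.continuous_ofReal.comp hkernel).mul heval

lemma intervalIntegrable_duhamelIntegrand (ξ : ℝ) (y : TimeCurve T) (t : Icc (0 : ℝ) T) (b : ℝ) :
    IntervalIntegrable (fun t' ↦ (duhamelKernel ξ t t' : ℂ) * IccExtend hT y t') volume 0 b :=
  ((continuous_duhamelIntegrand hT).comp (f := fun t' ↦ (((ξ, y), t), t'))
    (by fun_prop)).intervalIntegrable 0 b

lemma continuous_duhamelIntegral :
    Continuous fun q : (ℝ × TimeCurve T) × Icc (0 : ℝ) T ↦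
      ∫ t' in (0 : ℝ)..q.2, (duhamelKernel q.1.1 q.2 t' : ℂ) * IccExtend hT q.1.2 t' :=
  intervalIntegral.continuous_parametric_intervalIntegral_of_continuous
    (f := fun (q : (ℝ × TimeCurve T) × Icc (0 : ℝ) T) t' ↦
      (duhamelKernel q.1.1 q.2 t' : ℂ) * IccExtend hT q.1.2 t')
    (continuous_duhamelIntegrand hT) (s := fun q ↦ (q.2 : ℝ)) (by fun_prop)

lemma norm_duhamelIntegral_le (ξ : ℝ) (y : TimeCurve T) (t : Icc (0 : ℝ) T) :
    ‖∫ t' in (0 : ℝ)..t, (duhamelKernel ξ t t' : ℂ) * IccExtend hT y t'‖ ≤ T ^ 2 * ‖y‖ := by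
  have integrand_le : ∀ t' ∈ uIoc 0 (t : ℝ),
      ‖(duhamelKernel ξ t t' : ℂ) * IccExtend hT y t'‖ ≤ T * ‖y‖ := fun t' ht' ↦ by
    rw [uIoc_of_le t.2.1] at ht'
    rw [norm_mul, Complex.norm_real]
    gcongr
    · refine (abs_duhamelKernel_le ξ t t').trans ?_
      rw [abs_of_nonneg (by linarith [ht'.2])]
      linarith [t.2.2, ht'.1]
    · exact y.norm_coe_le_norm _
  calc ‖∫ t' in (0 : ℝ)..t, (duhamelKernel ξ t t' : ℂ) * IccExtend hT y t'‖
    _ ≤ T * ‖y‖ * |(t : ℝ) - 0| :=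
      intervalIntegral.norm_integral_le_of_norm_le_const integrand_le
    _ ≤ T * ‖y‖ * T := by
      rw [sub_zero, abs_of_nonneg t.2.1]
      gcongr
      exact t.2.2
    _ = T ^ 2 * ‖y‖ := by ring

/-- The Duhamel operator at the frequency `ξ`, acting on curves. -/
def duhamel (ξ : ℝ) : TimeCurve T →L[ℂ] TimeCurve T :=
  LinearMap.mkContinuous
    { toFun y := ⟨fun t ↦ ∫ t' in (0 : ℝ)..t, (duhamelKernel ξ t t' : ℂ) * IccExtend hT y t',
        (continuous_duhamelIntegral hT).comp (f := fun t ↦ ((ξ, y), t)) (by fun_prop)⟩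
      map_add' y z := by
        ext t
        simp only [ContinuousMap.coe_mk, ContinuousMap.add_apply]
        rw [← intervalIntegral.integral_add (intervalIntegrable_duhamelIntegrand hT ξ y t t)
          (intervalIntegrable_duhamelIntegrand hT ξ z t t)]
        simp [IccExtend, mul_add]
      map_smul' c y := by
        ext t
        simp [IccExtend, mul_left_comm _ c] }
    (T ^ 2) fun y ↦ (ContinuousMap.norm_le _ (by positivity)).2 (norm_duhamelIntegral_le hT ξ y)

lemma duhamel_apply (ξ : ℝ) (y : TimeCurve T) (t : Icc (0 : ℝ) T) :
    duhamel hT ξ y t = ∫ t' in (0 : ℝ)..t, (duhamelKernel ξ t t' : ℂ) * IccExtend hT y t' :=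
  rfl

lemma continuous_duhamel : Continuous fun q : ℝ × TimeCurve T ↦ duhamel hT q.1 q.2 :=
  ContinuousMap.continuous_of_continuous_uncurry _ (continuous_duhamelIntegral hT)

lemma norm_duhamel_le (ξ : ℝ) : ‖duhamel hT ξ‖ ≤ T ^ 2 :=
  LinearMap.mkContinuous_norm_le _ (by positivity) _

lemma le_norm_duhamel_apply {ξ c : ℝ} (hξ : 1 / 2 ≤ ξ) (hc : 0 ≤ c) {y : TimeCurve T}
    (hy : ∀ t, c ≤ (y t).re) {t : Icc (0 : ℝ) T} (ht : (t : ℝ) ≤ 1) :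
    c * (t ^ 2 / 20) ≤ ‖duhamel hT ξ y t‖ := by
  have hint := intervalIntegrable_duhamelIntegrand hT ξ y t t
  have integrand_ge : ∀ t' ∈ Icc 0 (t : ℝ),
      c / 10 * (t - t') ≤ ((duhamelKernel ξ t t' : ℂ) * IccExtend hT y t').re := fun t' ht' ↦ by
    rw [Complex.re_ofReal_mul]
    have hkernel := le_duhamelKernel hξ ht'.2 (by linarith [ht'.1])
    calc c / 10 * (t - t') = (t - t') / 10 * c := by ring
      _ ≤ duhamelKernel ξ t t' * (y (projIcc 0 T hT t')).re :=
        mul_le_mul hkernel (hy _) hc ((by linarith [ht'.2] : 0 ≤ (t - t') / 10).trans hkernel)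
  calc c * (t ^ 2 / 20) = ∫ t' in (0 : ℝ)..t, c / 10 * (t - t') := by
        rw [intervalIntegral.integral_const_mul, intervalIntegral.integral_sub (by simp) (by simp),
          intervalIntegral.integral_const, integral_id, smul_eq_mul]
        ring
    _ ≤ ∫ t' in (0 : ℝ)..t, ((duhamelKernel ξ t t' : ℂ) * IccExtend hT y t').re :=
        intervalIntegral.integral_mono_on t.2.1
          (Continuous.intervalIntegrable (by fun_prop) _ _) ⟨hint.1.re, hint.2.re⟩ integrand_ge
    _ = (duhamel hT ξ y t).re := Complex.reCLM.intervalIntegral_comp_comm hint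
    _ ≤ ‖duhamel hT ξ y t‖ := Complex.re_le_norm _

end Duhamel

section Nonlinearity

variable {T : ℝ}

lemma convolutionL1_mul_apply (f g : SolutionSpace T) :
    ∀ᵐ ξ, ∀ t, Integrable (fun η ↦ f η t * g (ξ - η) t) ∧
      convolutionL1 (.mul ℂ (TimeCurve T)) f g ξ t = ∫ η, f η t * g (ξ - η) t := by
  filter_upwards [coeFn_convolutionL1 (.mul ℂ (TimeCurve T)) f g,
    ae_convolutionExistsAt_L1 (.mul ℂ (TimeCurve T)) f g] with ξ e hξ t
  refine ⟨(ContinuousMap.evalCLM ℂ t).integrable_comp hξ, ?_⟩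
  rw [e, convolution_def, ContinuousMap.integral_apply hξ]
  rfl

lemma ae_forall_sub_left {p : ℝ → Prop} (h : ∀ᵐ η, p η) (ξ : ℝ) : ∀ᵐ η, p (ξ - η) :=
  (quasiMeasurePreserving_sub_left_of_right_invariant volume ξ).tendsto_ae.eventually h

/-- The `(n + 1)`-fold convolution of `V` with itself, curves being multiplied pointwise. -/
abbrev curvePow (V : SolutionSpace T) (n : ℕ) : SolutionSpace T :=
  convPow (.mul ℂ (TimeCurve T)) V n

lemma convList_replicate (V : SolutionSpace T) (n : ℕ) :
    ∀ᵐ ξ, ∀ t, convList (List.replicate (n + 1) fun η ↦ V η t) ξ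
      = curvePow V n ξ t := by
  induction n with
  | zero => simp [convPow, bilinPow, convList]
  | succ n ih =>
    filter_upwards [convolutionL1_mul_apply V (curvePow V n)] with ξ e t
    rw [List.replicate_succ, List.replicate_succ, convList, ← List.replicate_succ,
      curvePow, convPow_succ, (e t).2, conv]
    refine integral_congr_ae ?_
    filter_upwards [ae_forall_sub_left ih ξ] with η hη
    rw [hη t]

variable (hT : 0 ≤ T)

/-- The Duhamel operator acting on each frequency separately. -/
def duhamelL1 : SolutionSpace T →L[ℂ] SolutionSpace T :=
  fiberwiseLp (continuous_duhamel hT) (norm_duhamel_le hT)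

lemma coeFn_duhamelL1 (V : SolutionSpace T) :
    duhamelL1 hT V =ᵐ[volume] fun ξ ↦ duhamel hT ξ (V ξ) :=
  coeFn_fiberwiseLp _ _ V

/-- The nonlinear term `Î_k(V, …, V)` with `k = n + 1`. -/
def nonlinearTerm (n : ℕ) (V : SolutionSpace T) : SolutionSpace T :=
  duhamelL1 hT (curvePow V n)

lemma nonlinearTerm_zero (n : ℕ) : nonlinearTerm hT n 0 = 0 := by
  rw [nonlinearTerm, curvePow, convPow_zero_left, map_zero]

lemma norm_nonlinearTerm_sub_le (n : ℕ) {M : ℝ} {f g : SolutionSpace T} (hf : ‖f‖ ≤ M)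
    (hg : ‖g‖ ≤ M) :
    ‖nonlinearTerm hT n f - nonlinearTerm hT n g‖ ≤ T ^ 2 * ((n + 1) * M ^ n) * ‖f - g‖ := by
  have hM : 0 ≤ M := (norm_nonneg f).trans hf
  calc ‖nonlinearTerm hT n f - nonlinearTerm hT n g‖
      ≤ T ^ 2 * ‖curvePow f n - curvePow g n‖ := by
        rw [nonlinearTerm, nonlinearTerm, ← map_sub]
        exact norm_fiberwiseLp_apply_le (continuous_duhamel hT) (norm_duhamel_le hT) _
    _ ≤ T ^ 2 * ((n + 1) * 1 ^ n * M ^ n * ‖f - g‖) := by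
        gcongr
        refine (norm_convPow_sub_le _ hf hg n).trans ?_
        gcongr
        exact ContinuousLinearMap.opNorm_mul_le ℂ (TimeCurve T)
    _ = T ^ 2 * ((n + 1) * M ^ n) * ‖f - g‖ := by ring

/-- The curve of functions of the frequency defined by an element of the solution space, constant
in time outside `[0, T]`. -/
def toCurve (V : SolutionSpace T) (t ξ : ℝ) : ℂ := IccExtend hT (V ξ) t

lemma integrable_toCurve (V : SolutionSpace T) (t : ℝ) : Integrable (toCurve hT V t) :=
  (ContinuousMap.evalCLM ℂ (projIcc 0 T hT t)).integrable_comp (L1.integrable_coeFn V)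

lemma continuousL1On_toCurve (V : SolutionSpace T) : ContinuousL1On T (toCurve hT V) := by
  intro t₀ _
  simp only [eLpNorm_one_eq_lintegral_enorm]
  have norm_toCurve_le (t ξ : ℝ) : ‖toCurve hT V t ξ‖ ≤ ‖V ξ‖ := (V ξ).norm_coe_le_norm _
  rw [← lintegral_zero]
  refine tendsto_lintegral_filter_of_dominated_convergence'
    (fun ξ ↦ ENNReal.ofReal (2 * ‖V ξ‖)) ?_ ?_ ?_ ?_
  · exact .of_forall fun t ↦
      ((integrable_toCurve hT V t).sub (integrable_toCurve hT V t₀)).1.enorm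
  · refine .of_forall fun t ↦ .of_forall fun ξ ↦ ?_
    rw [← ofReal_norm]
    refine ENNReal.ofReal_le_ofReal ((norm_sub_le _ _).trans ?_)
    linarith [norm_toCurve_le t ξ, norm_toCurve_le t₀ ξ]
  · exact ((L1.integrable_coeFn V).norm.const_mul 2).lintegral_lt_top.ne
  · refine .of_forall fun ξ ↦ ?_
    have hcont : Continuous fun t ↦ ‖toCurve hT V t ξ - toCurve hT V t₀ ξ‖ₑ :=
      (((V ξ).continuous.Icc_extend' (h := hT)).sub continuous_const).enorm
    simpa using (hcont.continuousWithinAt (s := Icc 0 T) (x := t₀)).tendsto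

lemma isGIBqSol_toCurve (n : ℕ) {w₀ w₁ : ℝ → ℂ} (h₀ : Integrable w₀) (h₁ : Integrable w₁)
    {V : SolutionSpace T}
    (hV : V = linearEvolution hT (h₀.toL1 w₀) (h₁.toL1 w₁) + nonlinearTerm hT n V) :
    IsGIBqSol (n + 1) T w₀ w₁ (toCurve hT V) := by
  refine ⟨fun t _ ↦ integrable_toCurve hT V t, continuousL1On_toCurve hT V, fun t ht ↦ ?_⟩
  have hV_ae :=
    Lp.coeFn_add (linearEvolution hT (h₀.toL1 w₀) (h₁.toL1 w₁)) (nonlinearTerm hT n V)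
  rw [← hV] at hV_ae
  filter_upwards [hV_ae, linearEvolution_apply hT (h₀.toL1 w₀) (h₁.toL1 w₁), h₀.coeFn_toL1,
    h₁.coeFn_toL1, coeFn_duhamelL1 hT (curvePow V n), convList_replicate V n]
    with ξ e e_lin e₀ e₁ e_duhamel e_conv
  have nonlinearTerm_eq :
      nonlinearTerm hT n V ξ ⟨t, ht⟩ = Ihat (n + 1) (fun _ ↦ toCurve hT V) t ξ := by
    rw [nonlinearTerm, e_duhamel, duhamel_apply, Ihat]
    refine intervalIntegral.integral_congr fun t' _ ↦ ?_
    simp only [List.ofFn_const, IccExtend, Function.comp_def, ← e_conv, duhamelKernel]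
    rfl
  rw [toCurve, IccExtend_of_mem hT _ ht, e, Pi.add_apply, ContinuousMap.add_apply, e_lin,
    nonlinearTerm_eq, Shat, Shat, e₀, e₁]

end Nonlinearity

section Bump

/-- The indicator function of the interval of radius `1` around `c`. -/
def bump (c : ℝ) : ℝ → ℝ := (Metric.closedBall c 1).indicator 1

lemma bump_nonneg (c ξ : ℝ) : 0 ≤ bump c ξ :=
  indicator_nonneg (fun _ _ ↦ zero_le_one) ξ

lemma bump_eq_one {c ξ : ℝ} (h : |ξ - c| ≤ 1) : bump c ξ = 1 :=
  indicator_of_mem (mem_closedBall_iff_norm.2 h) _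

lemma bump_eq_zero {c ξ : ℝ} (h : 1 < |ξ - c|) : bump c ξ = 0 :=
  indicator_of_notMem (fun h' ↦ h.not_ge (mem_closedBall_iff_norm.1 h')) _

lemma bump_mul_bump_sub (a d ξ η : ℝ) :
    bump a η * bump d (ξ - η)
      = (Metric.closedBall a 1 ∩ Metric.closedBall (ξ - d) 1).indicator 1 η := by
  classical
  have hmem : ξ - η ∈ Metric.closedBall d 1 ↔ η ∈ Metric.closedBall (ξ - d) 1 := by
    rw [mem_closedBall_iff_norm, mem_closedBall_iff_norm', sub_right_comm]
  rw [inter_indicator_one, Pi.mul_apply, bump, bump]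
  simp only [indicator_apply, hmem, Pi.one_apply]

lemma integrable_bump (c : ℝ) : Integrable (bump c) :=
  (integrable_indicator_iff Metric.isClosed_closedBall.measurableSet).2
    (integrableOn_const measure_closedBall_lt_top.ne)

lemma integral_bump (c : ℝ) : ∫ ξ, bump c ξ = 2 := by
  rw [bump, integral_indicator_one Metric.isClosed_closedBall.measurableSet, measureReal_def,
    Real.volume_closedBall, ENNReal.toReal_ofReal] <;> norm_num

lemma one_div_toReal_le_one {p : ℝ≥0∞} (hp : 1 ≤ p) : 1 / p.toReal ≤ 1 := by
  rcases eq_or_ne p ⊤ with rfl | hp_top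
  · simp
  · exact div_le_one_of_le₀ (by simpa using ENNReal.toReal_mono hp_top hp) ENNReal.toReal_nonneg

lemma eLpNorm_bump_le {p : ℝ≥0∞} (hp : 1 ≤ p) (c : ℝ) : eLpNorm (bump c) p volume ≤ 2 := by
  calc eLpNorm (bump c) p volume
      ≤ ‖(1 : ℝ)‖ₑ * volume (Metric.closedBall c 1) ^ (1 / p.toReal) :=
        eLpNorm_indicator_const_le 1 p
    _ = 2 ^ (1 / p.toReal) := by rw [Real.volume_closedBall]; norm_num
    _ ≤ 2 ^ (1 : ℝ) := ENNReal.rpow_le_rpow_of_exponent_le one_le_two (one_div_toReal_le_one hp)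
    _ = 2 := ENNReal.rpow_one 2

lemma integrable_bump_mul_bump_sub (a d ξ : ℝ) : Integrable fun η ↦ bump a η * bump d (ξ - η) := by
  simp only [bump_mul_bump_sub]
  exact (integrable_indicator_iff (Metric.isClosed_closedBall.measurableSet.inter
    Metric.isClosed_closedBall.measurableSet)).2
      (integrableOn_const (measure_ne_top_of_subset inter_subset_left measure_closedBall_lt_top.ne))

lemma bump_add_le_integral (a d ξ : ℝ) : bump (a + d) ξ ≤ ∫ η, bump a η * bump d (ξ - η) := by
  rcases lt_or_ge 1 |ξ - (a + d)| with hξ | hξ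
  · rw [bump_eq_zero hξ]
    exact integral_nonneg fun η ↦ mul_nonneg (bump_nonneg _ _) (bump_nonneg _ _)
  -- The two intervals both contain the interval of radius `1/2` around their midpoint.
  set m := (a + ξ - d) / 2 with hm
  have subset_inter : Metric.closedBall m (1 / 2)
      ⊆ Metric.closedBall a 1 ∩ Metric.closedBall (ξ - d) 1 := by
    intro η hη
    rw [mem_inter_iff, mem_closedBall_iff_norm, mem_closedBall_iff_norm]
    rw [mem_closedBall_iff_norm] at hη
    simp only [Real.norm_eq_abs, abs_le] at hξ hη ⊢
    constructor <;> constructor <;> linarith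
  simp only [bump_mul_bump_sub]
  rw [bump_eq_one hξ, integral_indicator_one (Metric.isClosed_closedBall.measurableSet.inter
    Metric.isClosed_closedBall.measurableSet)]
  calc (1 : ℝ) = volume.real (Metric.closedBall m (1 / 2)) := by
        rw [measureReal_def, Real.volume_closedBall, ENNReal.toReal_ofReal] <;> norm_num
    _ ≤ _ := measureReal_mono subset_inter
        (measure_ne_top_of_subset inter_subset_left measure_closedBall_lt_top.ne)

end Bump

section Domination

open scoped ComplexOrder

variable {T : ℝ}

/-- `f` is real and at least `c` on the interval of radius `1` around `a`, and real and nonnegative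
elsewhere, at all times. -/
def DominatesBump (c a : ℝ) (f : SolutionSpace T) : Prop :=
  ∀ᵐ ξ, ∀ t, ((c * bump a ξ : ℝ) : ℂ) ≤ f ξ t

lemma DominatesBump.convolution {c d a b : ℝ} {f g : SolutionSpace T} (hc : 0 ≤ c) (hd : 0 ≤ d)
    (hf : DominatesBump c a f) (hg : DominatesBump d b g) :
    DominatesBump (c * d) (a + b) (convolutionL1 (.mul ℂ (TimeCurve T)) f g) := by
  filter_upwards [convolutionL1_mul_apply f g] with ξ hξ t
  have regroup (η : ℝ) :
      c * bump a η * (d * bump b (ξ - η)) = c * d * (bump a η * bump b (ξ - η)) := by ring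
  have hint : Integrable fun η ↦ c * bump a η * (d * bump b (ξ - η)) := by
    simp only [regroup]
    exact (integrable_bump_mul_bump_sub a b ξ).const_mul _
  calc ((c * d * bump (a + b) ξ : ℝ) : ℂ)
      ≤ ((∫ η, c * bump a η * (d * bump b (ξ - η)) : ℝ) : ℂ) := by
        simp only [regroup]
        rw [integral_const_mul, Complex.real_le_real]
        exact mul_le_mul_of_nonneg_left (bump_add_le_integral a b ξ) (mul_nonneg hc hd)
    _ = ∫ η, ((c * bump a η * (d * bump b (ξ - η)) : ℝ) : ℂ) := integral_complex_ofReal.symm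
    _ ≤ ∫ η, f η t * g (ξ - η) t := by
        refine integral_mono_ae hint.ofReal (hξ t).1 ?_
        filter_upwards [hf, ae_forall_sub_left hg ξ] with η hfη hgη
        have hbf : (0 : ℂ) ≤ ((c * bump a η : ℝ) : ℂ) :=
          Complex.zero_le_real.2 (mul_nonneg hc (bump_nonneg _ _))
        have hbg : (0 : ℂ) ≤ ((d * bump b (ξ - η) : ℝ) : ℂ) :=
          Complex.zero_le_real.2 (mul_nonneg hd (bump_nonneg _ _))
        rw [Complex.ofReal_mul]
        exact mul_le_mul (hfη t) (hgη t) hbg (hbf.trans (hfη t))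
    _ = convolutionL1 (.mul ℂ (TimeCurve T)) f g ξ t := (hξ t).2.symm

lemma DominatesBump.pow {c a : ℝ} {f : SolutionSpace T} (hc : 0 ≤ c)
    (hf : DominatesBump c a f) (n : ℕ) :
    DominatesBump (c ^ (n + 1)) ((n + 1) * a) (curvePow f n) := by
  induction n with
  | zero => simpa [convPow, bilinPow] using hf
  | succ n ih =>
    have := hf.convolution hc (pow_nonneg hc _) ih
    rwa [← pow_succ', show a + (n + 1) * a = ((n + 1 : ℕ) + 1) * a by push_cast; ring] at this

lemma DominatesBump.pow_balanced {c a : ℝ} {f : SolutionSpace T} {n : ℕ} (hn : 1 ≤ n)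
    (hc : 0 ≤ c) (hf : DominatesBump c a f) (hf' : DominatesBump c (-(n * a)) f) :
    DominatesBump (c ^ (n + 1)) 0 (curvePow f n) := by
  obtain ⟨n, rfl⟩ := Nat.exists_eq_add_of_le' hn
  have := hf'.convolution hc (pow_nonneg hc _) (hf.pow hc n)
  rwa [← pow_succ', show -(((n + 1 : ℕ) : ℝ) * a) + (n + 1) * a = 0 by push_cast; ring] at this

end Domination

section BumpPair

/-- Two bumps of height `R`. In an `(n + 1)`-fold convolution, one factor near `-nN` and `n` factors
near `N` interact to produce frequencies near the origin. -/
def bumpPair (n : ℕ) (N R ξ : ℝ) : ℂ := (R * (bump N ξ + bump (-(n * N)) ξ) : ℝ)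

variable {n : ℕ} {N R : ℝ}

lemma integrable_bumpPair : Integrable (bumpPair n N R) :=
  (((integrable_bump N).add (integrable_bump (-(n * N)))).const_mul R).ofReal

lemma norm_bumpPair (hR : 0 ≤ R) (ξ : ℝ) :
    ‖bumpPair n N R ξ‖ = R * (bump N ξ + bump (-(n * N)) ξ) := by
  rw [bumpPair, Complex.norm_real, Real.norm_of_nonneg]
  exact mul_nonneg hR (add_nonneg (bump_nonneg _ _) (bump_nonneg _ _))

lemma integral_norm_bumpPair (hR : 0 ≤ R) : ∫ ξ, ‖bumpPair n N R ξ‖ = 4 * R := by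
  simp only [norm_bumpPair hR]
  rw [integral_const_mul, integral_add (integrable_bump _) (integrable_bump _), integral_bump,
    integral_bump]
  ring

lemma bumpPair_eq_zero (hn : 1 ≤ n) {ξ : ℝ} (hξ : |ξ| < N - 1) : bumpPair n N R ξ = 0 := by
  have hnN : N ≤ n * N :=
    le_mul_of_one_le_left (by linarith [abs_nonneg ξ]) (by exact_mod_cast hn)
  obtain ⟨hξ₁, hξ₂⟩ := abs_lt.1 hξ
  rw [bumpPair, bump_eq_zero (lt_abs.2 (.inr (by linarith))),
    bump_eq_zero (lt_abs.2 (.inl (by linarith)))]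
  simp

end BumpPair

section BandMass

variable {T : ℝ} (t : Icc (0 : ℝ) T)

/-- The mass of `f` at time `t` in the band of frequencies `[1/2, 1]`. -/
def bandMass (f : SolutionSpace T) : ℝ := ∫ ξ in Icc (1 / 2 : ℝ) 1, ‖f ξ t‖

lemma integrable_eval (f : SolutionSpace T) : Integrable fun ξ ↦ f ξ t :=
  (ContinuousMap.evalCLM ℂ t).integrable_comp (L1.integrable_coeFn f)

lemma bandMass_le_norm (f : SolutionSpace T) : bandMass t f ≤ ‖f‖ := by
  rw [L1.norm_eq_integral_norm]
  calc bandMass t f ≤ ∫ ξ, ‖f ξ t‖ :=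
        setIntegral_le_integral (integrable_eval t f).norm (.of_forall fun _ ↦ norm_nonneg _)
    _ ≤ ∫ ξ, ‖f ξ‖ := integral_mono (integrable_eval t f).norm (L1.integrable_coeFn f).norm
        fun ξ ↦ (f ξ).norm_coe_le_norm t

lemma bandMass_sub_le (f g : SolutionSpace T) :
    bandMass t (f - g) ≤ bandMass t f + bandMass t g := by
  have hf := (integrable_eval t f).norm.integrableOn (s := Icc (1 / 2 : ℝ) 1)
  have hg := (integrable_eval t g).norm.integrableOn (s := Icc (1 / 2 : ℝ) 1)
  rw [bandMass, bandMass, bandMass, ← integral_add hf hg]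
  refine integral_mono_ae (integrable_eval t (f - g)).norm.integrableOn (hf.add hg) ?_
  filter_upwards [ae_restrict_of_ae (Lp.coeFn_sub f g)] with ξ e
  rw [e]
  exact norm_sub_le _ _

lemma le_bandMass {c : ℝ} {f : SolutionSpace T}
    (h : ∀ᵐ ξ, ξ ∈ Icc (1 / 2 : ℝ) 1 → c ≤ ‖f ξ t‖) : c / 2 ≤ bandMass t f := by
  calc c / 2 = ∫ _ in Icc (1 / 2 : ℝ) 1, c := by
        rw [setIntegral_const, Real.volume_real_Icc_of_le (by norm_num), smul_eq_mul]
        ring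
    _ ≤ bandMass t f := setIntegral_mono_on_ae (integrableOn_const (by simp))
        (integrable_eval t f).norm.integrableOn measurableSet_Icc h

end BandMass

section Inflation

open scoped ComplexOrder

variable {T : ℝ} (hT : 0 ≤ T)

lemma dominatesBump_linearEvolution (hT₁ : T ≤ 1) {c a : ℝ} (hc : 0 ≤ c)
    {w : Lp ℂ 1 (volume : Measure ℝ)} (hw : ∀ᵐ ξ, ((c * bump a ξ : ℝ) : ℂ) ≤ w ξ) :
    DominatesBump (c / 2) a (linearEvolution hT w 0) := by
  have half_le_cos (ξ : ℝ) (t : Icc (0 : ℝ) T) : 1 / 2 ≤ Real.cos (t * lam ξ) := by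
    have angle_nonneg : 0 ≤ t * lam ξ := mul_nonneg t.2.1 (lam_nonneg ξ)
    have angle_le : t * lam ξ ≤ 1 :=
      mul_le_one₀ (t.2.2.trans hT₁) (lam_nonneg ξ) (lam_le_one ξ)
    nlinarith [Real.one_sub_sq_div_two_le_cos (x := t * lam ξ)]
  filter_upwards [linearEvolution_apply hT w 0, hw, Lp.coeFn_zero ℂ 1 (volume : Measure ℝ)]
    with ξ e hwξ e₀ t
  have hcb : 0 ≤ c * bump a ξ := mul_nonneg hc (bump_nonneg _ _)
  rw [e t, Shat, e₀, Pi.zero_apply, mul_zero, add_zero]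
  calc ((c / 2 * bump a ξ : ℝ) : ℂ)
      ≤ ((Real.cos (t * lam ξ) * (c * bump a ξ) : ℝ) : ℂ) := by
        rw [Complex.real_le_real]
        linarith [mul_le_mul_of_nonneg_right (half_le_cos ξ t) hcb]
    _ ≤ Real.cos (t * lam ξ) * w ξ := by
        rw [Complex.ofReal_mul]
        exact mul_le_mul_of_nonneg_left hwξ
          (Complex.zero_le_real.2 (by linarith [half_le_cos ξ t]))

lemma le_bandMass_nonlinearTerm {n : ℕ} (hn : 1 ≤ n) {c a : ℝ} (hc : 0 ≤ c)
    {f : SolutionSpace T} (hf : DominatesBump c a f) (hf' : DominatesBump c (-(n * a)) f)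
    {t : Icc (0 : ℝ) T} (ht : (t : ℝ) ≤ 1) :
    c ^ (n + 1) * (t ^ 2 / 20) / 2 ≤ bandMass t (nonlinearTerm hT n f) := by
  refine le_bandMass t ?_
  filter_upwards [coeFn_duhamelL1 hT (curvePow f n), hf.pow_balanced hn hc hf'] with ξ e hpow hξ
  rw [nonlinearTerm, e]
  refine le_norm_duhamel_apply hT hξ.1 (pow_nonneg hc _) (fun t' ↦ ?_) ht
  have hbump : bump 0 ξ = 1 := bump_eq_one (by rw [abs_le]; constructor <;> linarith [hξ.1, hξ.2])
  have hre := (Complex.le_def.1 (hpow t')).1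
  rwa [hbump, mul_one, Complex.ofReal_re] at hre

lemma exists_eq_add_nonlinearTerm (n : ℕ) {M : ℝ} (hM : T ^ 2 * ((n + 1) * M ^ n) ≤ 1 / 2)
    {A : SolutionSpace T} (hA : 2 * ‖A‖ ≤ M) :
    ∃ V, V = A + nonlinearTerm hT n V ∧ ‖V‖ ≤ M := by
  obtain ⟨V, hV, hV_norm⟩ := exists_eq_add_of_contracting A (nonlinearTerm_zero hT n)
    fun f g hf hg ↦
      (norm_nonlinearTerm_sub_le hT n (hf.trans hA) (hg.trans hA)).trans (by gcongr)
  exact ⟨V, hV, hV_norm.trans hA⟩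

lemma bandMass_nonlinearTerm_le {n : ℕ} {M κ : ℝ} (hκ : T ^ 2 * ((n + 1) * M ^ n) = κ)
    (hκ₁ : κ ≤ 1) {F G V : SolutionSpace T} (hV : V = F + G + nonlinearTerm hT n V)
    (hVM : ‖V‖ ≤ M) (hFM : ‖F‖ ≤ M) (t : Icc (0 : ℝ) T) :
    bandMass t (nonlinearTerm hT n F)
      ≤ bandMass t V + bandMass t F + (2 * ‖G‖ + κ ^ 2 * M) := by
  have hM : 0 ≤ M := (norm_nonneg V).trans hVM
  have hκ₀ : 0 ≤ κ := hκ ▸ by positivity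
  have norm_nonlinearTerm_le : ‖nonlinearTerm hT n V‖ ≤ κ * M := by
    have := norm_nonlinearTerm_sub_le hT n hVM (norm_zero.trans_le hM)
    rw [nonlinearTerm_zero, sub_zero, sub_zero, hκ] at this
    exact this.trans (by gcongr)
  have hVF : V - F = G + nonlinearTerm hT n V := by
    rw [sub_eq_iff_eq_add', ← add_assoc]
    exact hV
  have norm_VF_le : ‖V - F‖ ≤ ‖G‖ + κ * M :=
    hVF ▸ (norm_add_le _ _).trans (by gcongr)
  have norm_error_le : ‖nonlinearTerm hT n V - nonlinearTerm hT n F‖ ≤ ‖G‖ + κ ^ 2 * M :=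
    calc _ ≤ κ * ‖V - F‖ := hκ ▸ norm_nonlinearTerm_sub_le hT n hVM hFM
      _ ≤ κ * (‖G‖ + κ * M) := by gcongr
      _ ≤ ‖G‖ + κ ^ 2 * M := by nlinarith [norm_nonneg G]
  have decomposition : nonlinearTerm hT n F
      = V - F - (G + (nonlinearTerm hT n V - nonlinearTerm hT n F)) := by
    rw [hVF]
    abel
  calc bandMass t (nonlinearTerm hT n F)
      = bandMass t (V - F - (G + (nonlinearTerm hT n V - nonlinearTerm hT n F))) :=
        congrArg _ decomposition
    _ ≤ bandMass t V + bandMass t F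
        + bandMass t (G + (nonlinearTerm hT n V - nonlinearTerm hT n F)) :=
        (bandMass_sub_le t _ _).trans (by gcongr; exact bandMass_sub_le t _ _)
    _ ≤ bandMass t V + bandMass t F + (2 * ‖G‖ + κ ^ 2 * M) := by
        gcongr
        refine (bandMass_le_norm t _).trans ((norm_add_le _ _).trans ?_)
        linarith

lemma bandMass_linearEvolution_bumpPair {n : ℕ} (hn : 1 ≤ n) {N R : ℝ} (hN : 2 < N)
    (t : Icc (0 : ℝ) T) :
    bandMass t (linearEvolution hT (integrable_bumpPair.toL1 (bumpPair n N R)) 0) = 0 := by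
  refine setIntegral_eq_zero_of_ae_eq_zero ?_
  filter_upwards [linearEvolution_apply hT (integrable_bumpPair.toL1 (bumpPair n N R)) 0,
    (integrable_bumpPair (n := n) (N := N) (R := R)).coeFn_toL1,
    Lp.coeFn_zero ℂ 1 (volume : Measure ℝ)] with ξ e e₀ e₁ hξ
  have hξN : |ξ| < N - 1 := abs_lt.2 ⟨by linarith [hξ.1], by linarith [hξ.2]⟩
  rw [e t, Shat, e₀, e₁, bumpPair_eq_zero hn hξN, Pi.zero_apply, mul_zero, mul_zero, add_zero,
    norm_zero]

lemma dominatesBump_linearEvolution_bumpPair (hT₁ : T ≤ 1) {n : ℕ} {N R : ℝ} (hR : 0 ≤ R) :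
    DominatesBump (R / 2) N (linearEvolution hT (integrable_bumpPair.toL1 (bumpPair n N R)) 0) ∧
      DominatesBump (R / 2) (-(n * N))
        (linearEvolution hT (integrable_bumpPair.toL1 (bumpPair n N R)) 0) := by
  constructor <;> refine dominatesBump_linearEvolution hT hT₁ hR ?_ <;>
    filter_upwards [(integrable_bumpPair (n := n) (N := N) (R := R)).coeFn_toL1] with ξ e <;>
    rw [e, bumpPair, Complex.real_le_real, mul_add]
  · exact le_add_of_nonneg_right (mul_nonneg hR (bump_nonneg _ _))
  · exact le_add_of_nonneg_left (mul_nonneg hR (bump_nonneg _ _))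

lemma norm_linearEvolution_bumpPair_le {n : ℕ} {N R : ℝ} (hR : 0 ≤ R) :
    ‖linearEvolution hT (integrable_bumpPair.toL1 (bumpPair n N R)) 0‖ ≤ 4 * R := by
  have := norm_linearEvolution_le hT (integrable_bumpPair.toL1 (bumpPair n N R)) 0
  rwa [norm_zero, mul_zero, add_zero, L1.norm_of_fun_eq_integral_norm,
    integral_norm_bumpPair hR] at this

lemma norm_linearEvolution_toL1_le (hT₁ : T ≤ 1) {ψ₀ ψ₁ : ℝ → ℂ} (h₀ : Integrable ψ₀)
    (h₁ : Integrable ψ₁) :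
    ‖linearEvolution hT (h₀.toL1 ψ₀) (h₁.toL1 ψ₁)‖ ≤ (∫ ξ, ‖ψ₀ ξ‖) + ∫ ξ, ‖ψ₁ ξ‖ := by
  rw [← L1.norm_of_fun_eq_integral_norm h₀, ← L1.norm_of_fun_eq_integral_norm h₁]
  refine (norm_linearEvolution_le hT _ _).trans ?_
  gcongr
  exact mul_le_of_le_one_left (norm_nonneg _) hT₁

lemma bandMass_eq_toCurve (V : SolutionSpace T) :
    bandMass ⟨T, right_mem_Icc.2 hT⟩ V = ∫ ξ in Icc (1 / 2 : ℝ) 1, ‖toCurve hT V T ξ‖ := by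
  simp only [bandMass, toCurve, IccExtend_right]

end Inflation

lemma exists_isGIBqSol_of_bumpPair {T : ℝ} (hT : 0 ≤ T) (hT₁ : T ≤ 1) {n : ℕ} (hn : 1 ≤ n)
    {N R κ : ℝ} (hN : 2 < N) (hκ : T ^ 2 * ((n + 1) * (10 * R) ^ n) = κ) (hκ₁ : κ ≤ 1 / 2)
    {ψ₀ ψ₁ : ℝ → ℂ} (h₀ : Integrable ψ₀) (h₁ : Integrable ψ₁)
    (hR : (∫ ξ, ‖ψ₀ ξ‖) + ∫ ξ, ‖ψ₁ ξ‖ ≤ R) :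
    ∃ v, IsGIBqSol (n + 1) T (bumpPair n N R + ψ₀) ψ₁ v ∧
      (R / 2) ^ (n + 1) * (T ^ 2 / 20) / 2
        ≤ (∫ ξ in Icc (1 / 2 : ℝ) 1, ‖v T ξ‖)
          + (2 * ((∫ ξ, ‖ψ₀ ξ‖) + ∫ ξ, ‖ψ₁ ξ‖) + κ ^ 2 * (10 * R)) := by
  have hR₀ : 0 ≤ R := le_trans (by positivity) hR
  have hφ : Integrable (bumpPair n N R) := integrable_bumpPair
  set F := linearEvolution hT (hφ.toL1 _) 0 with hF
  set G := linearEvolution hT (h₀.toL1 _) (h₁.toL1 _) with hG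
  have hF_norm : ‖F‖ ≤ 4 * R := norm_linearEvolution_bumpPair_le hT hR₀
  have hG_norm : ‖G‖ ≤ (∫ ξ, ‖ψ₀ ξ‖) + ∫ ξ, ‖ψ₁ ξ‖ := norm_linearEvolution_toL1_le hT hT₁ h₀ h₁
  have data_norm : 2 * ‖F + G‖ ≤ 10 * R := by linarith [norm_add_le F G]
  have data_eq : linearEvolution hT ((hφ.add h₀).toL1 _) (h₁.toL1 _) = F + G := by
    rw [hF, hG, ← linearEvolution_add, zero_add]
    rfl
  obtain ⟨V, hV, hV_norm⟩ := exists_eq_add_nonlinearTerm hT n (hκ.trans_le hκ₁) data_norm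
  obtain ⟨hdom, hdom'⟩ := dominatesBump_linearEvolution_bumpPair hT hT₁ (n := n) (N := N) hR₀
  refine ⟨toCurve hT V, isGIBqSol_toCurve hT n (hφ.add h₀) h₁ (by rwa [data_eq]), ?_⟩
  have lower := le_bandMass_nonlinearTerm hT hn (by positivity) hdom hdom'
    (t := ⟨T, right_mem_Icc.2 hT⟩) hT₁
  have upper := bandMass_nonlinearTerm_le hT hκ (by linarith) hV hV_norm
    (hF_norm.trans (by linarith)) ⟨T, right_mem_Icc.2 hT⟩
  rw [hF, bandMass_linearEvolution_bumpPair hT hn hN, add_zero, bandMass_eq_toCurve hT V] at upper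
  exact lower.trans (upper.trans (by gcongr))

-- With `T = x^(-2n-1)` and `R = x^4`, the contraction constant `T² Rⁿ = x^(-2)` tends to `0`, while
-- the mass `T² Rⁿ⁺¹ = x²` of the nonlinear term tends to infinity.
lemma eventually_exists_isGIBqSol_of_bumpPair {n : ℕ} (hn : 1 ≤ n) {ψ₀ ψ₁ : ℝ → ℂ}
    (h₀ : Integrable ψ₀) (h₁ : Integrable ψ₁) (B : ℝ) :
    ∀ᶠ x : ℝ in atTop, ∀ N > 2, ∃ v,
      IsGIBqSol (n + 1) (x ^ (2 * n + 1))⁻¹ (bumpPair n N (x ^ 4) + ψ₀) ψ₁ v ∧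
        B ≤ ∫ ξ in Icc (1 / 2 : ℝ) 1, ‖v (x ^ (2 * n + 1))⁻¹ ξ‖ := by
  set K := (∫ ξ, ‖ψ₀ ξ‖) + ∫ ξ, ‖ψ₁ ξ‖
  set L : ℝ := (n + 1) * 10 ^ n with hL
  set c : ℝ := (1 / 2) ^ (n + 1) / 40 with hc
  have large_gain : ∀ᶠ x : ℝ in atTop, B + 2 * K + 10 * L ^ 2 ≤ c * x ^ 2 :=
    ((tendsto_pow_atTop two_ne_zero).const_mul_atTop (by positivity)).eventually_ge_atTop _
  have large_square : ∀ᶠ x : ℝ in atTop, 2 * L ≤ x ^ 2 :=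
    (tendsto_pow_atTop two_ne_zero).eventually_ge_atTop _
  have large_height : ∀ᶠ x : ℝ in atTop, K ≤ x ^ 4 :=
    (tendsto_pow_atTop four_ne_zero).eventually_ge_atTop _
  filter_upwards [large_gain, large_square, large_height, eventually_ge_atTop 1]
    with x hgain hsquare hheight hx N hN
  have hx₀ : 0 < x := by linarith
  have scaling : (x ^ (2 * n + 1))⁻¹ ^ 2 * (x ^ 4) ^ n = (x ^ 2)⁻¹ := by
    field_simp
    ring
  have contraction_eq : (x ^ (2 * n + 1))⁻¹ ^ 2 * ((n + 1) * (10 * x ^ 4) ^ n) = L / x ^ 2 := by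
    rw [mul_pow, div_eq_mul_inv, ← scaling, hL]
    ring
  have gain_eq : (x ^ 4 / 2) ^ (n + 1) * ((x ^ (2 * n + 1))⁻¹ ^ 2 / 20) / 2 = c * x ^ 2 := by
    have regroup : (x ^ 4 / 2) ^ (n + 1) * ((x ^ (2 * n + 1))⁻¹ ^ 2 / 20) / 2
        = c * ((x ^ (2 * n + 1))⁻¹ ^ 2 * (x ^ 4) ^ n * x ^ 4) := by
      rw [hc, div_pow, div_pow, one_pow]
      ring
    rw [regroup, scaling]
    field_simp
  have error_eq : (L / x ^ 2) ^ 2 * (10 * x ^ 4) = 10 * L ^ 2 := by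
    field_simp
  obtain ⟨v, hv, hv_mass⟩ := exists_isGIBqSol_of_bumpPair (by positivity)
    (inv_le_one_of_one_le₀ (one_le_pow₀ hx)) hn hN contraction_eq
    (by rw [div_le_div_iff₀ (pow_pos hx₀ 2) two_pos]; linarith) h₀ h₁ hheight
  refine ⟨v, hv, ?_⟩
  rw [gain_eq, error_eq] at hv_mass
  linarith

section WeightedNorm

lemma jbw_pos (s ξ : ℝ) : 0 < jbw s ξ := Real.rpow_pos_of_pos (by positivity) _

lemma continuous_jbw (s : ℝ) : Continuous (jbw s) :=
  (continuous_const.add (continuous_pow 2)).rpow_const fun ξ ↦ .inl (by positivity : 1 + ξ ^ 2 ≠ 0)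

lemma jbw_le_jbw_of_abs_le {s : ℝ} (hs : s ≤ 0) {ξ η : ℝ} (h : |ξ| ≤ |η|) : jbw s η ≤ jbw s ξ :=
  Real.rpow_le_rpow_of_nonpos (by positivity) (add_le_add_right (sq_le_sq.2 h) 1)
    (div_nonpos_of_nonpos_of_nonneg hs zero_le_two)

lemma tendsto_jbw_atTop {s : ℝ} (hs : s < 0) : Tendsto (jbw s) atTop (𝓝 0) := by
  have base : Tendsto (fun ξ : ℝ ↦ 1 + ξ ^ 2) atTop atTop :=
    tendsto_atTop_add_const_left _ _ (tendsto_pow_atTop two_ne_zero)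
  have := tendsto_rpow_neg_atTop (y := -(s / 2)) (by linarith)
  rw [neg_neg] at this
  exact this.comp base

lemma min_jbw_le {σ ξ : ℝ} (hξ : |ξ| ≤ 1) : min 1 (jbw σ 1) ≤ jbw σ ξ := by
  have hξ₁ : |ξ| ≤ |1| := by rwa [abs_one]
  rcases le_total σ 0 with hσ | hσ
  · exact (min_le_right _ _).trans (jbw_le_jbw_of_abs_le hσ hξ₁)
  · exact (min_le_left _ _).trans
      (Real.one_le_rpow (le_add_of_nonneg_right (sq_nonneg ξ)) (div_nonneg hσ zero_le_two))

variable {s : ℝ} {p : ℝ≥0∞}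

lemma FLnorm_eq_eLpNorm (w : ℝ → ℂ) :
    FLnorm s p w = eLpNorm (fun ξ ↦ (jbw s ξ : ℂ) * w ξ) p volume :=
  eLpNorm_congr_norm_ae (.of_forall fun ξ ↦ by simp)

lemma aestronglyMeasurable_jbw_mul {w : ℝ → ℂ} (hw : AEStronglyMeasurable w) :
    AEStronglyMeasurable fun ξ ↦ (jbw s ξ : ℂ) * w ξ :=
  (Complex.continuous_ofReal.comp (continuous_jbw s)).aestronglyMeasurable.mul hw

lemma FLnorm_add_le (hp : 1 ≤ p) {f g : ℝ → ℂ} (hf : AEStronglyMeasurable f)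
    (hg : AEStronglyMeasurable g) : FLnorm s p (f + g) ≤ FLnorm s p f + FLnorm s p g := by
  simp only [FLnorm_eq_eLpNorm, Pi.add_apply, mul_add]
  exact eLpNorm_add_le (aestronglyMeasurable_jbw_mul hf) (aestronglyMeasurable_jbw_mul hg) hp

lemma exists_integrable_FLnorm_sub_le (hp : p ≠ ⊤) {v : ℝ → ℂ} (hv : AEStronglyMeasurable v)
    (hv_fin : FLnorm s p v < ⊤) {δ : ℝ≥0∞} (hδ : δ ≠ 0) :
    ∃ ψ : ℝ → ℂ, Integrable ψ ∧ FLnorm s p (ψ - v) ≤ δ := by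
  have hweight : Continuous fun ξ ↦ (jbw s ξ : ℂ) :=
    Complex.continuous_ofReal.comp (continuous_jbw s)
  have hne (ξ : ℝ) : (jbw s ξ : ℂ) ≠ 0 := Complex.ofReal_ne_zero.2 (jbw_pos s ξ).ne'
  have hmem : MemLp (fun ξ ↦ (jbw s ξ : ℂ) * v ξ) p volume :=
    ⟨aestronglyMeasurable_jbw_mul hv, by rwa [← FLnorm_eq_eLpNorm]⟩
  obtain ⟨g, hg_supp, hg, hg_cont, -⟩ := hmem.exists_hasCompactSupport_eLpNorm_sub_le hp hδ
  refine ⟨fun ξ ↦ (jbw s ξ : ℂ)⁻¹ * g ξ,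
    ((hweight.inv₀ hne).mul hg_cont).integrable_of_hasCompactSupport hg_supp.mul_left, ?_⟩
  rw [eLpNorm_sub_comm] at hg
  refine hg.trans_eq' ?_
  rw [FLnorm_eq_eLpNorm]
  congr with ξ
  rw [Pi.sub_apply, Pi.sub_apply, mul_sub, mul_inv_cancel_left₀ (hne ξ)]

lemma FLnorm_bumpPair_le (hs : s ≤ 0) (hp : 1 ≤ p) {n : ℕ} (hn : 1 ≤ n) {N R : ℝ} (hN : 1 ≤ N)
    (hR : 0 ≤ R) : FLnorm s p (bumpPair n N R) ≤ ENNReal.ofReal (jbw s (N - 1) * R) * 4 := by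
  have hc : 0 ≤ jbw s (N - 1) * R := mul_nonneg (jbw_pos s _).le hR
  have pointwise (ξ : ℝ) : ‖jbw s ξ * ‖bumpPair n N R ξ‖‖
      ≤ ((jbw s (N - 1) * R) • (bump N + bump (-(n * N)))) ξ := by
    rw [Real.norm_of_nonneg (mul_nonneg (jbw_pos s ξ).le (norm_nonneg _)), Pi.smul_apply,
      smul_eq_mul, Pi.add_apply]
    have hbumps : 0 ≤ bump N ξ + bump (-(n * N)) ξ :=
      add_nonneg (bump_nonneg _ _) (bump_nonneg _ _)
    rcases lt_or_ge |ξ| (N - 1) with h | h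
    · rw [bumpPair_eq_zero hn h, norm_zero, mul_zero]
      positivity
    · rw [norm_bumpPair hR, mul_assoc]
      gcongr
      exact jbw_le_jbw_of_abs_le hs (by rwa [abs_of_nonneg (by linarith : 0 ≤ N - 1)])
  calc FLnorm s p (bumpPair n N R)
      ≤ eLpNorm ((jbw s (N - 1) * R) • (bump N + bump (-(n * N)))) p volume :=
        eLpNorm_mono_real pointwise
    _ = ENNReal.ofReal (jbw s (N - 1) * R) * eLpNorm (bump N + bump (-(n * N))) p volume := by
        rw [eLpNorm_const_smul, Real.enorm_of_nonneg hc]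
    _ ≤ ENNReal.ofReal (jbw s (N - 1) * R) * (2 + 2) := by
        gcongr
        exact (eLpNorm_add_le (integrable_bump _).1 (integrable_bump _).1 hp).trans
          (add_le_add (eLpNorm_bump_le hp _) (eLpNorm_bump_le hp _))
    _ = ENNReal.ofReal (jbw s (N - 1) * R) * 4 := by norm_num

lemma tendsto_FLnorm_bumpPair (hs : s < 0) (hp : 1 ≤ p) {n : ℕ} (hn : 1 ≤ n) {R : ℝ}
    (hR : 0 ≤ R) : Tendsto (fun N ↦ FLnorm s p (bumpPair n N R)) atTop (𝓝 0) := by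
  have hweight : Tendsto (fun N ↦ jbw s (N - 1)) atTop (𝓝 0) :=
    (tendsto_jbw_atTop hs).comp (tendsto_atTop_add_const_right _ (-1) tendsto_id)
  have hbound : Tendsto (fun N ↦ ENNReal.ofReal (jbw s (N - 1) * R) * 4) atTop (𝓝 0) := by
    simpa using ENNReal.Tendsto.mul_const (b := 4)
      (ENNReal.tendsto_ofReal (hweight.mul_const R)) (.inr (by simp))
  refine tendsto_of_tendsto_of_tendsto_of_le_of_le' tendsto_const_nhds hbound
    (.of_forall fun _ ↦ zero_le) ?_
  filter_upwards [eventually_ge_atTop 1] with N hN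
  exact FLnorm_bumpPair_le hs.le hp hn hN hR

lemma ofReal_mul_setIntegral_le_FLnorm (hp : 1 ≤ p) {A : Set ℝ} (hA : MeasurableSet A)
    (hA_vol : volume A ≤ 1) {b : ℝ} (hb : 0 ≤ b) (hbA : ∀ ξ ∈ A, b ≤ jbw s ξ) {w : ℝ → ℂ}
    (hw : Integrable w) : ENNReal.ofReal (b * ∫ ξ in A, ‖w ξ‖) ≤ FLnorm s p w := by
  have hmeas := aestronglyMeasurable_jbw_mul (s := s) hw.1
  rw [FLnorm_eq_eLpNorm]
  calc ENNReal.ofReal (b * ∫ ξ in A, ‖w ξ‖)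
      = ∫⁻ ξ in A, ENNReal.ofReal (b * ‖w ξ‖) := by
        rw [← integral_const_mul, ofReal_integral_eq_lintegral_ofReal
          (hw.norm.integrableOn.const_mul b)
          (.of_forall fun ξ ↦ mul_nonneg hb (norm_nonneg _))]
    _ ≤ ∫⁻ ξ in A, ‖(jbw s ξ : ℂ) * w ξ‖ₑ := by
        refine setLIntegral_mono' hA fun ξ hξ ↦ ?_
        rw [← ofReal_norm, norm_mul, Complex.norm_real, Real.norm_of_nonneg (jbw_pos s ξ).le]
        gcongr
        exact hbA ξ hξ
    _ = eLpNorm (fun ξ ↦ (jbw s ξ : ℂ) * w ξ) 1 (volume.restrict A) :=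
        eLpNorm_one_eq_lintegral_enorm.symm
    _ ≤ eLpNorm (fun ξ ↦ (jbw s ξ : ℂ) * w ξ) p (volume.restrict A)
          * volume.restrict A univ ^ (1 / (1 : ℝ≥0∞).toReal - 1 / p.toReal) :=
        eLpNorm_le_eLpNorm_mul_rpow_measure_univ hp hmeas.restrict
    _ ≤ eLpNorm (fun ξ ↦ (jbw s ξ : ℂ) * w ξ) p (volume.restrict A) := by
        refine mul_le_of_le_one_right' (ENNReal.rpow_le_one ?_ ?_)
        · rwa [Measure.restrict_apply_univ]
        · rw [ENNReal.toReal_one, div_one, sub_nonneg]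
          exact one_div_toReal_le_one hp
    _ ≤ eLpNorm (fun ξ ↦ (jbw s ξ : ℂ) * w ξ) p volume :=
        eLpNorm_mono_measure _ Measure.restrict_le_self

lemma exists_forall_lt_FLnorm (hp : 1 ≤ p) (C : ℝ) : ∃ B, ∀ w : ℝ → ℂ, Integrable w →
    B ≤ ∫ ξ in Icc (1 / 2 : ℝ) 1, ‖w ξ‖ → ENNReal.ofReal C < FLnorm s p w := by
  set b := min 1 (jbw s 1)
  have hb : 0 < b := lt_min one_pos (jbw_pos s 1)
  refine ⟨(|C| + 1) / b, fun w hw hmass ↦ ?_⟩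
  rw [div_le_iff₀' hb] at hmass
  calc ENNReal.ofReal C < ENNReal.ofReal (b * ∫ ξ in Icc (1 / 2 : ℝ) 1, ‖w ξ‖) :=
        (ENNReal.ofReal_lt_ofReal_iff (by linarith [abs_nonneg C])).2 (by linarith [le_abs_self C])
    _ ≤ FLnorm s p w := by
        refine ofReal_mul_setIntegral_le_FLnorm hp measurableSet_Icc ?_ hb.le ?_ hw
        · rw [Real.volume_Icc, ENNReal.ofReal_le_one]
          norm_num
        · exact fun ξ hξ ↦ min_jbw_le (abs_le.2 ⟨by linarith [hξ.1], hξ.2⟩)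

end WeightedNorm

end

theorem norm_inflation_Hs_general
    (k : ℕ) (hk : 2 ≤ k) (s σ : ℝ) (hs : s < 0) (p q : ℝ≥0∞) (hp : 1 ≤ p) (hp_top : p ≠ ⊤)
    (hq : 1 ≤ q) (v₀ v₁ : ℝ → ℂ) (hv₀m : AEStronglyMeasurable v₀) (hv₁m : AEStronglyMeasurable v₁)
    (hv₀ : FLnorm s p v₀ < ⊤) (hv₁ : FLnorm s p v₁ < ⊤) :
    ∀ ε : ℝ, 0 < ε →
      ∃ T : ℝ, T ∈ Set.Ioo 0 ε ∧
        ∃ w₀ w₁ : ℝ → ℂ, Integrable w₀ ∧ Integrable w₁ ∧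
          ∃ v : ℝ → ℝ → ℂ, IsGIBqSol k T w₀ w₁ v ∧
            FLnorm s p (fun ξ => w₀ ξ - v₀ ξ) + FLnorm s p (fun ξ => w₁ ξ - v₁ ξ)
                < ENNReal.ofReal ε ∧
            ENNReal.ofReal ε⁻¹ < FLnorm σ q (v T) := by
  intro ε hε
  obtain ⟨n, rfl⟩ : ∃ n, k = n + 1 := ⟨k - 1, by omega⟩
  have hn : 1 ≤ n := by omega
  set δ := ENNReal.ofReal ε / 3
  have hδ : δ ≠ 0 := (ENNReal.div_pos (ENNReal.ofReal_pos.2 hε).ne' (by simp)).ne'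
  obtain ⟨ψ₀, h₀, hψ₀⟩ := exists_integrable_FLnorm_sub_le hp_top hv₀m hv₀ hδ
  obtain ⟨ψ₁, h₁, hψ₁⟩ := exists_integrable_FLnorm_sub_le hp_top hv₁m hv₁ hδ
  obtain ⟨B, hB⟩ := exists_forall_lt_FLnorm (s := σ) hq ε⁻¹
  have short_time : ∀ᶠ x : ℝ in atTop, (x ^ (2 * n + 1))⁻¹ < ε :=
    (tendsto_pow_atTop (by omega)).inv_tendsto_atTop.eventually_lt_const hε
  obtain ⟨x, hx_sol, hx_time, hx⟩ := ((eventually_exists_isGIBqSol_of_bumpPair hn h₀ h₁ B).and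
    (short_time.and (eventually_gt_atTop 0))).exists
  obtain ⟨N, hN_small, hN⟩ := (((tendsto_FLnorm_bumpPair hs hp hn (R := x ^ 4)
    (by positivity)).eventually_lt_const hδ.bot_lt).and (eventually_gt_atTop 2)).exists
  obtain ⟨v, hv, hv_mass⟩ := hx_sol N hN
  refine ⟨_, ⟨by positivity, hx_time⟩, _, ψ₁, integrable_bumpPair.add h₀, h₁, v, hv, ?_,
    hB _ (hv.1 _ ⟨by positivity, le_rfl⟩) hv_mass⟩
  have data_close : FLnorm s p (bumpPair n N (x ^ 4) + ψ₀ - v₀) < δ + δ := by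
    rw [add_sub_assoc]
    exact (FLnorm_add_le hp integrable_bumpPair.1 (h₀.1.sub hv₀m)).trans_lt
      (ENNReal.add_lt_add_of_lt_of_le (hψ₀.trans_lt (by finiteness)).ne hN_small hψ₀)
  calc _ < δ + δ + δ :=
        ENNReal.add_lt_add_of_lt_of_le (hψ₁.trans_lt (by finiteness)).ne data_close hψ₁
    _ = ENNReal.ofReal ε := ENNReal.add_thirds _

/-- Norm inflation at general initial data in `H^s` for the generalized improved
Boussinesq equation (same-regularity case). -/
theorem norm_inflation_Hs
    (k : ℕ) (hk : 2 ≤ k) (s : ℝ) (hs : s < 0)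
    (v₀ v₁ : ℝ → ℂ) (hv₀m : Measurable v₀) (hv₁m : Measurable v₁)
    (hv₀ : FLnorm s 2 v₀ < ⊤) (hv₁ : FLnorm s 2 v₁ < ⊤) :
    ∀ ε : ℝ, 0 < ε →
      ∃ T : ℝ, T ∈ Set.Ioo 0 ε ∧
        ∃ w₀ w₁ : ℝ → ℂ, Integrable w₀ ∧ Integrable w₁ ∧
          ∃ v : ℝ → ℝ → ℂ, IsGIBqSol k T w₀ w₁ v ∧
            FLnorm s 2 (fun ξ => w₀ ξ - v₀ ξ) + FLnorm s 2 (fun ξ => w₁ ξ - v₁ ξ)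
                < ENNReal.ofReal ε ∧
            ENNReal.ofReal ε⁻¹ < FLnorm s 2 (v T) :=
  norm_inflation_Hs_general k hk s s hs 2 2 one_le_two ENNReal.ofNat_ne_top one_le_two v₀ v₁
    hv₀m.aestronglyMeasurable hv₁m.aestronglyMeasurable hv₀ hv₁
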